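/- Let G be a finite group with centre Z and N ⊴ G a normal subgroup. If for every ρ ∈ Irr(G) trivial on Z there exists g ∈ N such that ρ restricted to C_G(g) contains the trivial character, then for every σ ∈ Irr(N) trivial on Z(N) there exists h ∈ N such that σ restricted to C_N(h) contains the trivial character. -/

import Mathlib

open scoped BigOperators Classical

open CategoryTheory in
/-- `χ` is the character of an irreducible complex representation of `G`. -/
def IsIrrChar (G : Type) [Group G] [Fintype G] (χ : G → ℂ) : Prop :=
  ∃ V : FDRep ℂ G, Simple V ∧ χ = fun g => V.character g

open CategoryTheory in
lemma aux_irr {G : Type} [Group G] [Fintype G] {V : Type} [AddCommGroup V] [Module ℂ V]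
    [FiniteDimensional ℂ V] (ρ : Representation ℂ G V) [ρ.IsIrreducible] :
    IsIrrChar G ρ.character := by
  refine ⟨FDRep.of ρ, ?_, rfl⟩
  rw [FDRep.simple_iff_char_is_norm_one]
  have : Invertible (Nat.card G : ℂ) := invertibleOfNonzero (NeZero.ne (Nat.card G : ℂ))
  have h := Representation.card_inv_mul_sum_char_mul_char_eq_finrank ρ ρ
  rw [Representation.IsIrreducible.finrank_intertwiningMap_self, Nat.cast_one,
    inv_mul_eq_one₀ (NeZero.ne (Nat.card G : ℂ))] at h
  exact h.symm

lemma aux_fixed {G : Type} [Group G] [Fintype G] {V : Type} [AddCommGroup V] [Module ℂ V]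
    [FiniteDimensional ℂ V] (ρ : Representation ℂ G V) (H : Subgroup G) :
    (∑ h : G, if h ∈ H then ρ.character h else 0) ≠ 0 ↔ ∃ v : V, v ≠ 0 ∧ ∀ h ∈ H, ρ h v = v := by
  have e : (∑ h : G, if h ∈ H then ρ.character h else 0)
      = ∑ h : H, Representation.character (ρ.comp H.subtype : Representation ℂ H V) h := by
    rw [← Finset.sum_filter]
    exact Finset.sum_subtype _ (by simp) _
  have : Invertible (Nat.card H : ℂ) := invertibleOfNonzero (NeZero.ne (Nat.card H : ℂ))
  have h := Representation.card_inv_mul_sum_char_eq_finrank (ρ.comp H.subtype : Representation ℂ H V)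
  rw [← e] at h
  have h2 : (∑ h : G, if h ∈ H then ρ.character h else 0) ≠ 0 ↔
     Module.finrank ℂ (Representation.invariants (ρ.comp H.subtype : Representation ℂ H V)) ≠ 0 := by
    rw [← Nat.cast_ne_zero (R := ℂ), ← h]
    simp
  rw [h2, ← Nat.pos_iff_ne_zero, Module.finrank_pos_iff_exists_ne_zero]
  constructor
  · rintro ⟨⟨v, hv⟩, hne⟩
    exact ⟨v, fun h => hne (by ext; exact h), fun x hx => hv ⟨x, hx⟩⟩
  · rintro ⟨v, hne, hv⟩
    exact ⟨⟨v, fun x => hv x.1 x.2⟩, fun h => hne (congrArg Subtype.val h)⟩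

open CategoryTheory in
lemma aux_simple {G : Type} [Group G] [Fintype G] (V : FDRep ℂ G) [Simple V] :
    (∃ v : V, v ≠ 0) ∧ ∀ z ∈ Subgroup.center G, V.character z = V.character 1 → V.ρ z = 1 := by
  have hne : ∃ v : V, v ≠ 0 := by
    by_contra! hc
    apply id_nonzero V
    apply Action.Hom.ext
    ext v
    exact (hc _).trans (hc _).symm
  refine ⟨hne, fun z hz hchar => ?_⟩
  let f : V ⟶ V := ⟨V.ρ.toFun z |> ModuleCat.ofHom |> InducedCategory.homMk, fun g => by
    ext v
    have : V.ρ (z * g) v = V.ρ (g * z) v := by rw [Subgroup.mem_center_iff.1 hz g]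
    rw [map_mul, map_mul] at this
    exact this⟩
  obtain ⟨c, hc⟩ := endomorphism_simple_eq_smul_id ℂ f
  have h1 : V.ρ z = c • 1 := by
    ext v
    have := congrArg (fun k : V ⟶ V => k.hom.hom.hom v) hc
    exact this.symm
  obtain ⟨v, hv⟩ := hne
  have : Nontrivial V := ⟨v, 0, hv⟩
  have h2 : (Module.finrank ℂ V : ℂ) ≠ 0 := by
    exact_mod_cast (Module.finrank_pos (R := ℂ) (M := V)).ne'
  have h3 : V.character z = c * Module.finrank ℂ V := by
    rw [FDRep.character, h1, map_smul, LinearMap.trace_one, smul_eq_mul]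
  rw [h3, FDRep.char_one] at hchar
  have : c = 1 := mul_right_cancel₀ h2 (hchar.trans (one_mul _).symm)
  rw [h1, this, one_smul]

lemma aux_atom {G : Type} [Group G] {V : Type} [AddCommGroup V] [Module ℂ V]
    [FiniteDimensional ℂ V] (ρ : Representation ℂ G V) (F : Subrepresentation ρ) (hF : F ≠ ⊥) :
    ∃ W : Subrepresentation ρ, W ≤ F ∧ W.toRepresentation.IsIrreducible := by
  have : WellFoundedLT (Subrepresentation ρ) := by
    have hm : StrictMono (Subrepresentation.toSubmodule : Subrepresentation ρ → Submodule ℂ V) :=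
      fun a b h => h
    exact hm.wellFoundedLT
  obtain ⟨W, hW, hle⟩ := (IsAtomic.eq_bot_or_exists_atom_le F).resolve_left hF
  refine ⟨W, hle, ?_⟩
  have hWne : ∃ w ∈ W, w ≠ 0 := by
    by_contra! hc
    apply hW.1
    ext w
    exact ⟨fun h => hc w h, fun h => by
      have : w = 0 := h
      rw [this]; exact W.toSubmodule.zero_mem⟩
  obtain ⟨w, hw, hw0⟩ := hWne
  refine { exists_pair_ne := ⟨⊥, ⊤, fun h => ?_⟩, eq_bot_or_eq_top := fun τ => ?_ }
  · have : (⟨w, hw⟩ : W.toSubmodule) ∈ (⊥ : Subrepresentation W.toRepresentation) := by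
      rw [h]; trivial
    exact hw0 (congrArg Subtype.val (show (⟨w, hw⟩ : W.toSubmodule) = 0 from this))
  · let τ' : Subrepresentation ρ := ⟨τ.toSubmodule.map W.toSubmodule.subtype, by
      rintro g _ ⟨v, hv, rfl⟩
      exact ⟨W.toRepresentation g v, τ.apply_mem_toSubmodule g hv, rfl⟩⟩
    have hτ : τ' ≤ W := by
      rintro _ ⟨v, hv, rfl⟩
      exact v.2
    rcases hW.le_iff.1 hτ with h | h
    · left
      ext v
      constructor
      · intro hv
        have : (v : V) ∈ τ' := ⟨v, hv, rfl⟩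
        rw [h] at this
        exact Subtype.ext this
      · intro hv
        have : v = 0 := hv
        rw [this]; exact τ.toSubmodule.zero_mem
    · right
      ext v
      refine ⟨fun _ => trivial, fun _ => ?_⟩
      have : (v : V) ∈ τ' := by rw [h]; exact v.2
      obtain ⟨u, hu, huv⟩ := this
      have : u = v := Subtype.ext huv
      rw [← this]; exact hu

/-- Right translation on functions. -/
def rightReg (G V : Type) [Group G] [AddCommGroup V] [Module ℂ V] :
    Representation ℂ G (G → V) where
  toFun g := LinearMap.funLeft ℂ V (fun x => x * g)
  map_one' := by ext; simp [LinearMap.funLeft]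
  map_mul' a b := by ext; simp [LinearMap.funLeft, mul_assoc]

/-- Functions equivariant under `N` and invariant under the centre. -/
def coindSub {G V : Type} [Group G] [AddCommGroup V] [Module ℂ V] (N : Subgroup G)
    (ρ : Representation ℂ N V) : Subrepresentation (rightReg G V) where
  toSubmodule :=
    { carrier := {f | (∀ (n : N) (x : G), f (n * x) = ρ n (f x)) ∧
        ∀ z ∈ Subgroup.center G, ∀ x, f (z * x) = f x}
      add_mem' := by
        rintro a b ⟨h1, h2⟩ ⟨h3, h4⟩
        exact ⟨fun n x => by simp [h1, h3], fun z hz x => by simp [h2 z hz, h4 z hz]⟩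
      zero_mem' := by simp
      smul_mem' := by
        rintro c a ⟨h1, h2⟩
        exact ⟨fun n x => by simp [h1], fun z hz x => by simp [h2 z hz]⟩ }
  apply_mem_toSubmodule g f hf := by
    refine ⟨fun n x => ?_, fun z hz x => ?_⟩
    · have := hf.1 n (x * g)
      simpa [rightReg, LinearMap.funLeft, mul_assoc] using this
    · have := hf.2 z hz (x * g)
      simpa [rightReg, LinearMap.funLeft, mul_assoc] using this

lemma coindSub_ne_bot {G V : Type} [Group G] [Fintype G] [AddCommGroup V] [Module ℂ V]
    (N : Subgroup G) (ρ : Representation ℂ N V) (hz : ∀ z : N, (z : G) ∈ Subgroup.center G → ρ z = 1)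
    (v : V) (hv : v ≠ 0) : coindSub N ρ ≠ ⊥ := by
  have key : ∀ (n m : N) (z w : G), z ∈ Subgroup.center G → w ∈ Subgroup.center G →
      (n : G) * z = m * w → ρ n v = ρ m v := by
    intro n m z w hzz hw h
    have h1 : ρ (m⁻¹ * n) = 1 := by
      apply hz
      have : ((m⁻¹ * n : N) : G) = w * z⁻¹ := by
        rw [eq_mul_inv_iff_mul_eq]
        push_cast
        rw [mul_assoc, h, inv_mul_cancel_left]
      rw [this]
      exact mul_mem hw (inv_mem hzz)
    have : n = m * (m⁻¹ * n) := by group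
    rw [this, map_mul, h1, mul_one]
  let P : G → N → Prop := fun g n => ∃ z ∈ Subgroup.center G, g = n * z
  let f : G → V := fun g => if h : ∃ n, P g n then ρ h.choose v else 0
  have hf : ∀ (n : N) (z : G), z ∈ Subgroup.center G → f (n * z) = ρ n v := by
    intro n z hzz
    have h : ∃ m, P (n * z) m := ⟨n, z, hzz, rfl⟩
    obtain ⟨w, hw, hh⟩ := h.choose_spec
    simp only [f, dif_pos h]
    exact key _ _ _ _ hw hzz hh.symm
  have hf0 : ∀ g, (¬ ∃ n, P g n) → f g = 0 := fun g h => by simp only [f, dif_neg h]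
  have hmem : f ∈ coindSub N ρ := by
    refine ⟨fun n x => ?_, fun z hzz x => ?_⟩
    · by_cases hx : ∃ m, P x m
      · obtain ⟨m, w, hw, rfl⟩ := hx
        rw [hf m w hw, ← mul_assoc, ← Subgroup.coe_mul, hf _ w hw, map_mul]; rfl
      · rw [hf0 x hx, map_zero]
        apply hf0
        rintro ⟨m, w, hw, h⟩
        exact hx ⟨n⁻¹ * m, w, hw, by push_cast; rw [mul_assoc, ← h, inv_mul_cancel_left]⟩
    · have hc := Subgroup.mem_center_iff.1 hzz
      by_cases hx : ∃ m, P x m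
      · obtain ⟨m, w, hw, rfl⟩ := hx
        rw [hf m w hw, ← hc, mul_assoc, hf _ _ (mul_mem hw hzz)]
      · rw [hf0 x hx]
        apply hf0
        rintro ⟨m, w, hw, h⟩
        refine hx ⟨m, w * z⁻¹, mul_mem hw (inv_mem hzz), ?_⟩
        rw [← mul_assoc, ← h, ← hc, mul_inv_cancel_right]
  intro hbot
  rw [hbot] at hmem
  have h0 : f = 0 := hmem
  have := hf 1 1 (one_mem _)
  rw [h0] at this
  simp at this
  exact hv this.symm

/-- If every `ρ ∈ Irr(G)` trivial on `Z(G)` contains the trivial character on some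
`C_G(g)` with `g ∈ N`, then every `σ ∈ Irr(N)` trivial on `Z(N)` contains the trivial
character on some `C_N(h)` with `h ∈ N`. -/
theorem stmt5 (G : Type) [Group G] [Fintype G] (N : Subgroup G) [N.Normal]
    (hG : ∀ ρ : G → ℂ, IsIrrChar G ρ → (∀ z ∈ Subgroup.center G, ρ z = ρ 1) →
      ∃ g ∈ N, (∑ h : G, if h ∈ Subgroup.centralizer {g} then ρ h else 0) ≠ 0) :
    ∀ σ : ↥N → ℂ, IsIrrChar ↥N σ →
      (∀ z ∈ Subgroup.center ↥N, σ z = σ 1) →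
      ∃ h ∈ N, (∑ x : ↥N, if (x : G) ∈ Subgroup.centralizer {h} then σ x else 0) ≠ 0 := by
  rintro σ ⟨V, hV, rfl⟩ hσ
  have := hV
  obtain ⟨⟨v, hv⟩, hker⟩ := aux_simple V
  have hz : ∀ z : N, (z : G) ∈ Subgroup.center G → V.ρ z = 1 := by
    intro z hz
    have hzN : z ∈ Subgroup.center N :=
      Subgroup.mem_center_iff.2 fun n => Subtype.ext (Subgroup.mem_center_iff.1 hz n)
    exact hker z hzN (hσ z hzN)
  obtain ⟨W, hWF, hirr⟩ := aux_atom _ (coindSub N V.ρ) (coindSub_ne_bot N V.ρ hz v hv)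
  obtain ⟨g, hg, hsum⟩ := hG _ (aux_irr W.toRepresentation) (by
    intro z hz
    have : W.toRepresentation z = 1 := by
      ext f x
      have h1 := (hWF f.2).2 z hz x
      rw [← Subgroup.mem_center_iff.1 hz x] at h1
      exact h1
    rw [Representation.character, this, Representation.character, map_one W.toRepresentation])
  obtain ⟨w, hw0, hw⟩ := (aux_fixed _ _).1 hsum
  obtain ⟨x, hx⟩ : ∃ x, w.1 x ≠ 0 := by
    by_contra! hc
    exact hw0 (Subtype.ext (funext hc))
  refine ⟨x * g * x⁻¹, ‹N.Normal›.conj_mem g hg x, ?_⟩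
  refine (aux_fixed (V := V) V.ρ ((Subgroup.centralizer {x * g * x⁻¹}).comap N.subtype)).2
    ⟨w.1 x, hx, fun n hn => ?_⟩
  have hn' : (x * g * x⁻¹) * n = n * (x * g * x⁻¹) :=
    Subgroup.mem_centralizer_iff.1 (Subgroup.mem_comap.1 hn) _ rfl
  have hc : x⁻¹ * n * x ∈ Subgroup.centralizer {g} := by
    rw [Subgroup.mem_centralizer_iff]
    rintro _ rfl
    have := congrArg (fun t => x⁻¹ * t * x) hn'
    simpa [mul_assoc] using this
  have h2 : w.1 (x * (x⁻¹ * n * x)) = w.1 x :=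
    congrFun (congrArg Subtype.val (hw _ hc)) x
  rw [← (hWF w.2).1 n x]
  rw [← h2]
  congr 1
  group
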